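/- arXiv:gr-qc/0212085 — 2 statements merged into one kernel-verified Lean document; each statement's English description precedes it below -/
import Mathlib

section
/- Algebraic Rainich theorem (2-form version): let T be an η-self-adjoint endomorphism of ℝ⁴ with tr T = 0, 4·(T∘T) = tr(T∘T)·id, tr(T∘T) ≠ 0, and η(Tx,x) > 0 for every timelike vector x. Then there exists a simple 2-form F (i.e. tr(F̂∘(*F)̂) = 0) such that T = −(1/2)(F̂∘F̂ + (*F)̂∘(*F)̂). Moreover, for every θ ∈ ℝ the duality-rotated 2-form F_θ := cos θ · F + sin θ · (*F) has the same energy tensor: −(1/2)((F_θ)̂∘(F_θ)̂ + (*F_θ)̂∘(*F_θ)̂) = T. -/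
open Matrix Real

/-- Spacetime `ℝ⁴` with the standard basis. -/
abbrev V4 : Type := Fin 4 → ℝ

/-- `4×4` real matrices: components of bilinear forms / endomorphisms of `ℝ⁴`
in the standard basis `(e₀,e₁,e₂,e₃)`. -/
abbrev Mat4 : Type := Matrix (Fin 4) (Fin 4) ℝ

/-- The Minkowski metric `diag(-1,1,1,1)` (it equals its own inverse). -/
noncomputable def ηm : Mat4 := Matrix.diagonal ![-1, 1, 1, 1]

/-- The Minkowski bilinear form `η(x,y) = -x₀y₀ + x₁y₁ + x₂y₂ + x₃y₃`. -/
noncomputable def ηb (x y : V4) : ℝ := x ⬝ᵥ ηm *ᵥ y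

/-- A vector `x` is timelike if `η(x,x) < 0`. -/
noncomputable def Timelike (x : V4) : Prop := ηb x x < 0

/-- Evaluation of the bilinear form with component matrix `B`:
`B(x,y) = Σ xᵅ B_{αβ} yᵝ`. -/
noncomputable def bil (B : Mat4) (x y : V4) : ℝ := x ⬝ᵥ B *ᵥ y

/-- A 2-form is a skew-symmetric bilinear form. -/
noncomputable def IsTwoForm (B : Mat4) : Prop := Bᵀ = -B

/-- The endomorphism `B̂` associated with the bilinear form `B`, i.e. the unique
endomorphism with `η(B̂x, y) = B(x,y)` for all `x, y`.  (Indeed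
`ηb (hat B *ᵥ x) y = bil B x y`.) -/
noncomputable def hat (B : Mat4) : Mat4 := ηm * Bᵀ

/-- The totally antisymmetric Levi-Civita symbol on four indices, `ε₀₁₂₃ = 1`. -/
noncomputable def lc (a b c d : Fin 4) : ℝ :=
  (((b : ℕ) : ℝ) - ((a : ℕ) : ℝ)) * (((c : ℕ) : ℝ) - ((a : ℕ) : ℝ)) *
    (((d : ℕ) : ℝ) - ((a : ℕ) : ℝ)) * (((c : ℕ) : ℝ) - ((b : ℕ) : ℝ)) *
    (((d : ℕ) : ℝ) - ((b : ℕ) : ℝ)) * (((d : ℕ) : ℝ) - ((c : ℕ) : ℝ)) / 12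

/-- The Hodge dual of a 2-form:
`(*F)(e_α,e_β) = (1/2) Σ ε_{αβγδ} η^{γμ} η^{δν} F(e_μ,e_ν)`. -/
noncomputable def hodge (F : Mat4) : Mat4 :=
  Matrix.of fun α β => (1/2) * ∑ γ, ∑ δ, ∑ μ, ∑ ν, lc α β γ δ * ηm γ μ * ηm δ ν * F μ ν

/-- A unitary 2-form: `tr(Û∘Û) = 2` and `tr(Û∘(*U)̂) = 0`. -/
noncomputable def IsUnitary (U : Mat4) : Prop :=
  IsTwoForm U ∧ (hat U * hat U).trace = 2 ∧ (hat U * hat (hodge U)).trace = 0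

/-- An endomorphism `L` is η-self-adjoint if `η(Lx,y) = η(x,Ly)` for all `x, y`. -/
noncomputable def SelfAdj (L : Mat4) : Prop := ∀ x y : V4, ηb (L *ᵥ x) y = ηb x (L *ᵥ y)
/-- The 2-form with components `F₀₁, F₀₂, F₀₃, F₁₂, F₁₃, F₂₃`. -/
noncomputable def mkF (a b c d e f : ℝ) : Mat4 :=
  !![0, a, b, c; -a, 0, d, e; -b, -d, 0, f; -c, -e, -f, 0]

lemma mkF_two (a b c d e f : ℝ) : IsTwoForm (mkF a b c d e f) := by
  unfold IsTwoForm mkF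
  ext i j
  fin_cases i <;> fin_cases j <;> simp

lemma hodge_mkF (a b c d e f : ℝ) :
    hodge (mkF a b c d e f) = mkF f (-e) d (-c) b (-a) := by
  ext i j
  simp only [hodge, ηm, Matrix.diagonal_apply, Matrix.of_apply, mul_ite, ite_mul, mul_zero,
    zero_mul, Finset.sum_ite_eq, Finset.mem_univ, if_true]
  fin_cases i <;> fin_cases j <;> simp [Fin.sum_univ_four, lc, mkF] <;> ring

lemma hat_mkF (a b c d e f : ℝ) :
    hat (mkF a b c d e f) = !![0, a, b, c; a, 0, -d, -e; b, d, 0, -f; c, e, f, 0] := by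
  ext i j
  simp only [hat, ηm, Matrix.diagonal_mul]
  fin_cases i <;> fin_cases j <;> simp [mkF]

/-- Energy tensor of a 2-form. -/
noncomputable def enF (F : Mat4) : Mat4 :=
  (-(1/2) : ℝ) • (hat F * hat F + hat (hodge F) * hat (hodge F))

lemma enF_mkF (a b c d e f : ℝ) : enF (mkF a b c d e f) =
    !![-(a^2+b^2+c^2+d^2+e^2+f^2)/2, -(b*d+c*e), a*d-c*f, a*e+b*f;
       b*d+c*e, (-a^2+b^2+c^2+d^2+e^2-f^2)/2, -a*b+e*f, -a*c-d*f;
       -(a*d-c*f), -a*b+e*f, (a^2-b^2+c^2+d^2-e^2+f^2)/2, -b*c+d*e;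
       -(a*e+b*f), -a*c-d*f, -b*c+d*e, (a^2+b^2-c^2-d^2+e^2+f^2)/2] := by
  rw [enF, hodge_mkF, hat_mkF, hat_mkF]
  ext i j
  fin_cases i <;> fin_cases j <;> simp [Matrix.mul_apply, Fin.sum_univ_four] <;> ring

lemma trace_mkF (a b c d e f : ℝ) :
    (hat (mkF a b c d e f) * hat (hodge (mkF a b c d e f))).trace = 4 * (a*f - b*e + c*d) := by
  rw [hodge_mkF, hat_mkF, hat_mkF]
  simp [Matrix.trace, Matrix.mul_apply, Fin.sum_univ_four]
  ring

lemma enF_rot (a b c d e f θ : ℝ) :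
    enF (Real.cos θ • mkF a b c d e f + Real.sin θ • hodge (mkF a b c d e f))
      = enF (mkF a b c d e f) := by
  have h : Real.cos θ • mkF a b c d e f + Real.sin θ • hodge (mkF a b c d e f)
      = mkF (cos θ * a + sin θ * f) (cos θ * b - sin θ * e) (cos θ * c + sin θ * d)
        (cos θ * d - sin θ * c) (cos θ * e + sin θ * b) (cos θ * f - sin θ * a) := by
    rw [hodge_mkF]
    ext i j
    fin_cases i <;> fin_cases j <;> simp [mkF] <;> ring
  have hs : sin θ ^ 2 = 1 - cos θ ^ 2 := by linarith [sin_sq_add_cos_sq θ]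
  rw [h, enF_mkF, enF_mkF]
  ext i j
  fin_cases i <;> fin_cases j <;> simp <;> ring_nf <;> rw [hs] <;> ring

/-- A symmetric idempotent `3×3` matrix of trace one is `n nᵀ`. -/
lemma rank_one (N : Matrix (Fin 3) (Fin 3) ℝ) (hs : Nᵀ = N) (hi : N * N = N)
    (ht : N.trace = 1) : ∃ n : Fin 3 → ℝ, ∀ i j, N i j = n i * n j := by
  have hA : N.adjugate * N.adjugate = N.adjugate := by
    rw [← Matrix.adjugate_mul_distrib, hi]
  have hAs : N.adjugateᵀ = N.adjugate := by rw [Matrix.adjugate_transpose, hs]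
  have hs' : ∀ i j, N i j = N j i := fun i j => by
    conv_lhs => rw [← hs, Matrix.transpose_apply]
  have htr : N.adjugate.trace = 0 := by
    have h2 : (N * N).trace = 1 := by rw [hi, ht]
    simp only [Matrix.trace, Matrix.mul_apply, Fin.sum_univ_three, Matrix.diag_apply] at h2 ht
    simp only [Matrix.adjugate_fin_three, Matrix.trace, Fin.sum_univ_three, Matrix.diag_apply]
    simp
    linear_combination (1/2) * (N 0 0 + N 1 1 + N 2 2 + 1) * ht - (1/2) * h2
  have hz : N.adjugate = 0 := by
    have h1 : (N.adjugateᵀ * N.adjugate).trace = 0 := by rw [hAs, hA, htr]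
    have := Matrix.trace_conjTranspose_mul_self_eq_zero_iff (A := N.adjugate)
    rw [Matrix.conjTranspose_eq_transpose_of_trivial] at this
    exact this.1 h1
  have hm : ∀ i k l m : Fin 3, N i l * N k m = N i m * N k l := by
    have q : ∀ i j, N.adjugate i j = 0 := fun i j => by rw [hz]; rfl
    rw [Matrix.adjugate_fin_three] at q
    have q00 := q 0 0
    have q01 := q 0 1
    have q02 := q 0 2
    have q10 := q 1 0
    have q11 := q 1 1
    have q12 := q 1 2
    have q20 := q 2 0
    have q21 := q 2 1
    have q22 := q 2 2
    simp at q00 q01 q02 q10 q11 q12 q20 q21 q22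
    intro i k l m
    fin_cases i <;> fin_cases k <;> fin_cases l <;> fin_cases m <;> simp <;> linarith
  have hd : ∃ i, 0 < N i i := by
    by_contra hcon
    push Not at hcon
    simp only [Matrix.trace, Fin.sum_univ_three, Matrix.diag_apply] at ht
    linarith [hcon 0, hcon 1, hcon 2]
  obtain ⟨k, hk⟩ := hd
  refine ⟨fun i => N i k / sqrt (N k k), fun i j => ?_⟩
  have hsq : sqrt (N k k) * sqrt (N k k) = N k k := Real.mul_self_sqrt hk.le
  have := hm i k j k
  rw [div_mul_div_comm, hsq, eq_div_iff hk.ne', this, hs' k j]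

/-- Algebraic core in 3+1 form. -/
lemma core (W l s1 s2 s3 a b c d e f : ℝ) (hl : 0 < l) (hW : 0 < W)
    (hc : W^2 - (s1^2+s2^2+s3^2) = l^2)
    (htr : a + b + c = W)
    (e1 : a*s1 + d*s2 + e*s3 = W*s1) (e2 : d*s1 + b*s2 + f*s3 = W*s2)
    (e3 : e*s1 + f*s2 + c*s3 = W*s3)
    (m11 : a*a+d*d+e*e - s1*s1 = l^2) (m22 : d*d+b*b+f*f - s2*s2 = l^2)
    (m33 : e*e+f*f+c*c - s3*s3 = l^2)
    (m12 : a*d+d*b+e*f - s1*s2 = 0) (m13 : a*e+d*f+e*c - s1*s3 = 0)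
    (m23 : d*e+b*f+f*c - s2*s3 = 0) :
    ∃ A B C D E F : ℝ, A*F - B*E + C*D = 0 ∧ enF (mkF A B C D E F) =
      !![-W, -s1, -s2, -s3; s1, a, d, e; s2, d, b, f; s3, e, f, c] := by
  have hk : 0 < W + l := by linarith
  obtain ⟨k, hkd⟩ : ∃ k, k * (W + l) = 1 := ⟨(W+l)⁻¹, by field_simp⟩
  obtain ⟨g, hg⟩ : ∃ g, g * (2 * l) = 1 := ⟨(2*l)⁻¹, by field_simp⟩
  -- k |s|² = W - l
  have hks : k * (s1^2+s2^2+s3^2) = W - l := by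
    linear_combination (W - l) * hkd - k * hc
  obtain ⟨n, hn⟩ := rank_one
    !![g*(l - a + k*s1*s1), g*(-d + k*s1*s2), g*(-e+k*s1*s3);
       g*(-d + k*s1*s2), g*(l - b + k*s2*s2), g*(-f+k*s2*s3);
       g*(-e + k*s1*s3), g*(-f + k*s2*s3), g*(l - c+k*s3*s3)]
    (by ext i j; fin_cases i <;> fin_cases j <;> simp)
    (by
      ext i j
      fin_cases i <;> fin_cases j <;> simp [Matrix.mul_apply, Fin.sum_univ_three]
      · linear_combination g^2 * (m11 + k*s1*s1*hks - k*(s1*e1 + s1*e1) - s1*s1*hkd) + g*(l - a + k*s1*s1) * hg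
      · linear_combination g^2 * (m12 + k*s1*s2*hks - k*(s2*e1 + s1*e2) - s1*s2*hkd) + g*(-d + k*s1*s2) * hg
      · linear_combination g^2 * (m13 + k*s1*s3*hks - k*(s3*e1 + s1*e3) - s1*s3*hkd) + g*(-e + k*s1*s3) * hg
      · linear_combination g^2 * (m12 + k*s1*s2*hks - k*(s2*e1 + s1*e2) - s1*s2*hkd) + g*(-d + k*s1*s2) * hg
      · linear_combination g^2 * (m22 + k*s2*s2*hks - k*(s2*e2 + s2*e2) - s2*s2*hkd) + g*(l - b + k*s2*s2) * hg
      · linear_combination g^2 * (m23 + k*s2*s3*hks - k*(s3*e2 + s2*e3) - s2*s3*hkd) + g*(-f + k*s2*s3) * hg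
      · linear_combination g^2 * (m13 + k*s1*s3*hks - k*(s3*e1 + s1*e3) - s1*s3*hkd) + g*(-e + k*s1*s3) * hg
      · linear_combination g^2 * (m23 + k*s2*s3*hks - k*(s3*e2 + s2*e3) - s2*s3*hkd) + g*(-f + k*s2*s3) * hg
      · linear_combination g^2 * (m33 + k*s3*s3*hks - k*(s3*e3 + s3*e3) - s3*s3*hkd) + g*(l - c + k*s3*s3) * hg)
    (by
      simp [Matrix.trace, Fin.sum_univ_three]
      linear_combination g * hks - g * htr + hg)
  have q11 := hn 0 0
  have q12 := hn 0 1
  have q13 := hn 0 2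
  have q22 := hn 1 1
  have q23 := hn 1 2
  have q33 := hn 2 2
  simp at q11 q12 q13 q22 q23 q33
  obtain ⟨x, hx⟩ : ∃ x, x = n 0 := ⟨_, rfl⟩
  obtain ⟨y, hy⟩ : ∃ y, y = n 1 := ⟨_, rfl⟩
  obtain ⟨z, hz⟩ : ∃ z, z = n 2 := ⟨_, rfl⟩
  rw [← hx] at q11 q12 q13
  rw [← hy] at q12 q22 q23
  rw [← hz] at q13 q23 q33
  have hnn : x^2 + y^2 + z^2 = 1 := by
    linear_combination g * hks - g * htr + hg - q11 - q22 - q33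
  have r11 : a = l + k*s1*s1 - 2*l*(x*x) := by
    linear_combination (-2*l) * q11 + (l - a + k*s1*s1) * hg
  have r12 : d = k*s1*s2 - 2*l*(x*y) := by
    linear_combination (-2*l) * q12 + (-d + k*s1*s2) * hg
  have r13 : e = k*s1*s3 - 2*l*(x*z) := by
    linear_combination (-2*l) * q13 + (-e + k*s1*s3) * hg
  have r22 : b = l + k*s2*s2 - 2*l*(y*y) := by
    linear_combination (-2*l) * q22 + (l - b + k*s2*s2) * hg
  have r23 : f = k*s2*s3 - 2*l*(y*z) := by
    linear_combination (-2*l) * q23 + (-f + k*s2*s3) * hg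
  have r33 : c = l + k*s3*s3 - 2*l*(z*z) := by
    linear_combination (-2*l) * q33 + (l - c + k*s3*s3) * hg
  -- n is orthogonal to s
  have hns : x*s1 + y*s2 + z*s3 = 0 := by
    have o1 : x * (x*s1 + y*s2 + z*s3) = 0 := by
      linear_combination -s1*q11 - s2*q12 - s3*q13 - g*e1 + g*s1*hks
    have o2 : y * (x*s1 + y*s2 + z*s3) = 0 := by
      linear_combination -s1*q12 - s2*q22 - s3*q23 - g*e2 + g*s2*hks
    have o3 : z * (x*s1 + y*s2 + z*s3) = 0 := by
      linear_combination -s1*q13 - s2*q23 - s3*q33 - g*e3 + g*s3*hks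
    linear_combination x*o1 + y*o2 + z*o3 - (x*s1 + y*s2 + z*s3)*hnn
  clear hn q11 q12 q13 q22 q23 q33 m11 m12 m13 m22 m23 m33 e1 e2 e3 htr
  obtain ⟨t, ht⟩ : ∃ t, t^2 = W + l := ⟨sqrt (W+l), Real.sq_sqrt hk.le⟩
  -- magnetic part: (s × n) / t, with 1/t = k t
  refine ⟨t*x, t*y, t*z, k*t*(s1*y - s2*x), -(k*t*(s3*x - s1*z)), k*t*(s2*z - s3*y), ?_, ?_⟩
  · ring
  have hkt : k * t^2 = 1 := by rw [ht, hkd]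
  have hkk : k^2 * t^2 = k := by linear_combination k * hkt
  subst r11 r12 r13 r22 r23 r33
  rw [enF_mkF]
  have c11 : (k*t*(s2*z - s3*y))*(k*t*(s2*z - s3*y)) = (W-l)*(1-x*x) - k*s1*s1 := by
    linear_combination (s2*z - s3*y)*(s2*z - s3*y)*hkk + (x^2+y^2+z^2)*hks + (W-l)*hnn - k*(x*s1+y*s2+z*s3)*hns - k*s1*s1*hnn - x*x*hks + k*(s1*x+s1*x)*hns
  have c12 : (k*t*(s2*z - s3*y))*(k*t*(s3*x - s1*z)) = (W-l)*(0-x*y) - k*s1*s2 := by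
    linear_combination (s2*z - s3*y)*(s3*x - s1*z)*hkk - k*s1*s2*hnn - x*y*hks + k*(s1*y+s2*x)*hns
  have c13 : (k*t*(s2*z - s3*y))*(k*t*(s1*y - s2*x)) = (W-l)*(0-x*z) - k*s1*s3 := by
    linear_combination (s2*z - s3*y)*(s1*y - s2*x)*hkk - k*s1*s3*hnn - x*z*hks + k*(s1*z+s3*x)*hns
  have c22 : (k*t*(s3*x - s1*z))*(k*t*(s3*x - s1*z)) = (W-l)*(1-y*y) - k*s2*s2 := by
    linear_combination (s3*x - s1*z)*(s3*x - s1*z)*hkk + (x^2+y^2+z^2)*hks + (W-l)*hnn - k*(x*s1+y*s2+z*s3)*hns - k*s2*s2*hnn - y*y*hks + k*(s2*y+s2*y)*hns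
  have c23 : (k*t*(s3*x - s1*z))*(k*t*(s1*y - s2*x)) = (W-l)*(0-y*z) - k*s2*s3 := by
    linear_combination (s3*x - s1*z)*(s1*y - s2*x)*hkk - k*s2*s3*hnn - y*z*hks + k*(s2*z+s3*y)*hns
  have c33 : (k*t*(s1*y - s2*x))*(k*t*(s1*y - s2*x)) = (W-l)*(1-z*z) - k*s3*s3 := by
    linear_combination (s1*y - s2*x)*(s1*y - s2*x)*hkk + (x^2+y^2+z^2)*hks + (W-l)*hnn - k*(x*s1+y*s2+z*s3)*hns - k*s3*s3*hnn - z*z*hks + k*(s3*z+s3*z)*hns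
  have hH : ((t*x)^2 + (t*y)^2 + (t*z)^2 + (k*t*(s1*y - s2*x))^2 + (k*t*(s3*x - s1*z))^2 + (k*t*(s2*z - s3*y))^2)/2 = W := by
    linear_combination (1/2)*(c11 + c22 + c33 + (x^2+y^2+z^2)*ht - hks + 2*l*hnn)
  have p1 : (t*y)*(k*t*(s1*y - s2*x)) - (t*z)*(k*t*(s3*x - s1*z)) = s1 := by
    linear_combination (y*(s1*y - s2*x) - z*(s3*x - s1*z))*hkt + s1*hnn - x*hns
  have p2 : (t*z)*(k*t*(s2*z - s3*y)) - (t*x)*(k*t*(s1*y - s2*x)) = s2 := by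
    linear_combination (z*(s2*z - s3*y) - x*(s1*y - s2*x))*hkt + s2*hnn - y*hns
  have p3 : (t*x)*(k*t*(s3*x - s1*z)) - (t*y)*(k*t*(s2*z - s3*y)) = s3 := by
    linear_combination (x*(s3*x - s1*z) - y*(s2*z - s3*y))*hkt + s3*hnn - z*hns
  ext i j
  fin_cases i <;> fin_cases j <;> simp
  · linear_combination -hH
  · linear_combination -p1
  · linear_combination -p2
  · linear_combination -p3
  · linear_combination p1
  · linear_combination hH - c11 - x*x*ht
  · linear_combination - c12 - x*y*ht
  · linear_combination - c13 - x*z*ht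
  · linear_combination p2
  · linear_combination - c12 - x*y*ht
  · linear_combination hH - c22 - y*y*ht
  · linear_combination - c23 - y*z*ht
  · linear_combination p3
  · linear_combination - c13 - x*z*ht
  · linear_combination - c23 - y*z*ht
  · linear_combination hH - c33 - z*z*ht

/-- The energy condition excludes a negative square. -/
lemma no_neg (W s1 s2 s3 a b c d e f : ℝ) (hW : 0 < W)
    (hc : W^2 - (s1^2+s2^2+s3^2) < 0)
    (e1 : a*s1 + d*s2 + e*s3 = W*s1) (e2 : d*s1 + b*s2 + f*s3 = W*s2)
    (e3 : e*s1 + f*s2 + c*s3 = W*s3)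
    (en : ∀ w x y z : ℝ, x^2+y^2+z^2 < w^2 → 0 < W*w*w + 2*w*(s1*x+s2*y+s3*z)
      + x*(a*x+d*y+e*z) + y*(d*x+b*y+f*z) + z*(e*x+f*y+c*z)) : False := by
  obtain ⟨r, hr⟩ : ∃ r, r = s1^2+s2^2+s3^2 := ⟨_, rfl⟩
  have hWr : W^2 < r := by linarith
  have hr0 : 0 < r := lt_of_le_of_lt (sq_nonneg W) hWr
  have h1 := en r (-W*s1) (-W*s2) (-W*s3) (by
    have h2 : (-W*s1)^2 + (-W*s2)^2 + (-W*s3)^2 = W^2 * r := by rw [hr]; ring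
    rw [h2, sq r]
    exact mul_lt_mul_of_pos_right hWr hr0)
  have h3 : 0 < (W*r) * (W^2 - r) := by
    refine lt_of_lt_of_eq h1 ?_
    linear_combination W^2*(s1*e1 + s2*e2 + s3*e3) + (2*W*r - W^3)*hr
  have h4 : 0 < W * r := mul_pos hW hr0
  have h5 := (mul_pos_iff_of_pos_left h4).1 h3
  linarith

/-- Algebraic Rainich theorem (2-form version): a tensor `T` satisfying the
Rainich algebraic conditions is the energy tensor of a simple 2-form `F`, and
every duality rotation of `F` has the same energy tensor. -/
theorem stmt8 (T : Mat4) (hsa : SelfAdj T) (h0 : T.trace = 0)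
    (hsq : (4 : ℝ) • (T * T) = (T * T).trace • (1 : Mat4))
    (hne : (T * T).trace ≠ 0)
    (hen : ∀ x : V4, Timelike x → 0 < ηb (T *ᵥ x) x) :
    ∃ F : Mat4, IsTwoForm F ∧ (hat F * hat (hodge F)).trace = 0 ∧
      T = (-(1/2) : ℝ) • (hat F * hat F + hat (hodge F) * hat (hodge F)) ∧
      ∀ θ : ℝ,
        (-(1/2) : ℝ) •
          (hat (Real.cos θ • F + Real.sin θ • hodge F) *
            hat (Real.cos θ • F + Real.sin θ • hodge F) +
          hat (hodge (Real.cos θ • F + Real.sin θ • hodge F)) *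
            hat (hodge (Real.cos θ • F + Real.sin θ • hodge F))) = T := by
  have sa : ∀ i j, (if i = 0 then -1 else 1) * T i j = (if j = 0 then -1 else 1) * T j i := by
    intro i j
    have h := hsa (Pi.single j 1) (Pi.single i 1)
    revert h
    fin_cases i <;> fin_cases j <;>
      simp [ηb, ηm, Matrix.mulVec_diagonal, dotProduct, Fin.sum_univ_four, Matrix.mulVec,
        Matrix.diagonal_apply, Pi.single_apply] <;> intro h <;> linarith
  have a1 : T 0 1 = -T 1 0 := by have := sa 0 1; simp at this; linarith
  have a2 : T 0 2 = -T 2 0 := by have := sa 0 2; simp at this; linarith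
  have a3 : T 0 3 = -T 3 0 := by have := sa 0 3; simp at this; linarith
  have a4 : T 2 1 = T 1 2 := by have := sa 2 1; simpa using this
  have a5 : T 3 1 = T 1 3 := by have := sa 3 1; simpa using this
  have a6 : T 3 2 = T 2 3 := by have := sa 3 2; simpa using this
  obtain ⟨τ, hτ⟩ : ∃ τ, τ = (T * T).trace := ⟨_, rfl⟩
  rw [← hτ] at hsq hne
  have sq : ∀ i j, 4 * (T i 0 * T 0 j + T i 1 * T 1 j + T i 2 * T 2 j + T i 3 * T 3 j)
      = if i = j then τ else 0 := by
    intro i j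
    have h := congrFun (congrFun hsq i) j
    simpa [Matrix.mul_apply, Fin.sum_univ_four, Matrix.one_apply] using h
  have en : ∀ w x y z : ℝ, x^2+y^2+z^2 < w^2 → 0 < -w*(T 0 0 * w + T 0 1 * x + T 0 2 * y + T 0 3 * z)
      + x*(T 1 0 * w + T 1 1 * x + T 1 2 * y + T 1 3 * z)
      + y*(T 2 0 * w + T 2 1 * x + T 2 2 * y + T 2 3 * z)
      + z*(T 3 0 * w + T 3 1 * x + T 3 2 * y + T 3 3 * z) := by
    intro w x y z h
    have h1 := hen ![w, x, y, z] (by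
      simp [Timelike, ηb, ηm, Matrix.mulVec_diagonal, dotProduct, Fin.sum_univ_four]
      nlinarith)
    simp [ηb, ηm, Matrix.mulVec_diagonal, dotProduct, Fin.sum_univ_four, Matrix.mulVec,
      Matrix.diagonal_apply] at h1
    linarith
  have tr : T 0 0 + T 1 1 + T 2 2 + T 3 3 = 0 := by
    simpa [Matrix.trace, Fin.sum_univ_four] using h0
  have s00 := sq 0 0
  have s01 := sq 1 0
  have s02 := sq 2 0
  have s03 := sq 3 0
  have s11 := sq 1 1
  have s12 := sq 1 2
  have s13 := sq 1 3
  have s22 := sq 2 2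
  have s23 := sq 2 3
  have s33 := sq 3 3
  simp at s00 s01 s02 s03 s11 s12 s13 s22 s23 s33
  simp only [a1, a2, a3, a4, a5, a6] at s00 s01 s02 s03 s11 s12 s13 s22 s23 s33 en
  obtain ⟨W, hW⟩ : ∃ W, T 0 0 = -W := ⟨-T 0 0, by ring⟩
  rw [hW] at s00 s01 s02 s03 tr en
  have W0 : 0 < W := by
    have := en 1 0 0 0 (by norm_num)
    linarith
  have τ0 : 0 ≤ τ := by
    by_contra hneg
    push Not at hneg
    exact no_neg W (T 1 0) (T 2 0) (T 3 0) (T 1 1) (T 2 2) (T 3 3) (T 1 2) (T 1 3) (T 2 3) W0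
      (by linarith) (by linarith) (by linarith) (by linarith)
      (fun w x y z h => by linarith [en w x y z h])
  have τp : 0 < τ := lt_of_le_of_ne τ0 (Ne.symm hne)
  have hl : (sqrt (τ/4))^2 = τ/4 := Real.sq_sqrt (by positivity)
  obtain ⟨A, B, C, D, E, F, hsimple, hF⟩ := core W (sqrt (τ/4)) (T 1 0) (T 2 0) (T 3 0)
    (T 1 1) (T 2 2) (T 3 3) (T 1 2) (T 1 3) (T 2 3) (Real.sqrt_pos.2 (by positivity)) W0
    (by rw [hl]; linarith) (by linarith) (by linarith) (by linarith) (by linarith)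
    (by rw [hl]; linarith) (by rw [hl]; linarith) (by rw [hl]; linarith)
    (by linarith) (by linarith) (by linarith)
  have hT : enF (mkF A B C D E F) = T := by
    rw [hF]
    ext i j
    fin_cases i <;> fin_cases j <;> simp [hW, a1, a2, a3, a4, a5, a6]
  refine ⟨mkF A B C D E F, mkF_two _ _ _ _ _ _, ?_, hT.symm, fun θ => ?_⟩
  · rw [trace_mkF, hsimple, mul_zero]
  · exact (enF_rot A B C D E F θ).trans hT
end

section
/- Rainich's maxwellian structure theorem (flat case): let U be a smooth field of unitary 2-forms on ℝ⁴ (tr(Û∘Û) = 2 and tr(Û∘(*U)̂) = 0 pointwise), and define the 1-form fields Φ := i(δU)U − i(δ*U)*U and Ψ := −i(δU)*U − i(δ*U)U. Assume Φ and Ψ are closed, i.e. (D_uΦ)(x)(v) = (D_vΦ)(x)(u) and (D_uΨ)(x)(v) = (D_vΨ)(x)(u) for all x, u, v. Then there exist smooth functions φ, ψ : ℝ⁴ → ℝ with Dφ = Φ and Dψ = Ψ, and for any such φ, ψ the 2-form field F := e^φ·(cos ψ · U + sin ψ · *U) satisfies the source-free Maxwell equations δF = 0 and δ*F = 0 on ℝ⁴.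 -/
open Matrix Real

/-- The standard basis vector `e_i` of `ℝ⁴`. -/
noncomputable def e (i : Fin 4) : V4 := Pi.single i 1

/-- The directional derivative `(D_u A)(x)` of a bilinear-form-valued field `A`
at the point `x` in the direction `u` (computed entrywise). -/
noncomputable def Dd (A : V4 → Mat4) (x u : V4) : Mat4 :=
  Matrix.of fun i j => fderiv ℝ (fun y => A y i j) x u

/-- A smooth 2-form field: a smooth map from `ℝ⁴` to the space of
skew-symmetric bilinear forms on `ℝ⁴`. -/
noncomputable def SmoothTwoFormField (A : V4 → Mat4) : Prop :=
  (∀ x, (A x)ᵀ = -(A x)) ∧ ∀ i j, ContDiff ℝ (⊤ : ℕ∞) (fun x => A x i j)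

/-- The flat Killing–Yano equation: `(D_uA)(x)(v,z) + (D_vA)(x)(u,z) = 0`. -/
noncomputable def FlatKY (A : V4 → Mat4) : Prop :=
  ∀ x u v z : V4, bil (Dd A x u) v z + bil (Dd A x v) u z = 0

/-- The codifferential `(δA)(x)(z) = -Σ η^{αβ} (D_{e_α}A)(x)(e_β, z)`. -/
noncomputable def codiff (A : V4 → Mat4) (x z : V4) : ℝ :=
  -∑ α, ∑ β, ηm α β * bil (Dd A x (e α)) (e β) z

/-- The exterior derivative
`(dA)(x)(u,v,w) = (D_uA)(x)(v,w) + (D_vA)(x)(w,u) + (D_wA)(x)(u,v)`. -/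
noncomputable def extd (A : V4 → Mat4) (x u v w : V4) : ℝ :=
  bil (Dd A x u) v w + bil (Dd A x v) w u + bil (Dd A x w) u v

/-- The flat conformal Killing–Yano equation:
`(D_uA)(x)(v,z) + (D_vA)(x)(u,z) = 2η(u,v)a(x)(z) - a(x)(u)η(v,z) - a(x)(v)η(u,z)`
with `a = -(1/3)δA`. -/
noncomputable def FlatCKY (A : V4 → Mat4) : Prop :=
  ∀ x u v z : V4, bil (Dd A x u) v z + bil (Dd A x v) u z =
    2 * ηb u v * (-(1/3) * codiff A x z) - (-(1/3) * codiff A x u) * ηb v z -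
      (-(1/3) * codiff A x v) * ηb u z

/-- The interior contraction of a 1-form `ω` with a 2-form `G`:
`(i(ω)G)(z) = Σ η^{αβ} ω(e_α) G(e_β, z)`. -/
noncomputable def icontr (ω : V4 → ℝ) (G : Mat4) (z : V4) : ℝ :=
  ∑ α, ∑ β, ηm α β * ω (e α) * bil G (e β) z
lemma aux_hodge_eq (F : Mat4) (h : Fᵀ = -F) :
    hodge F = !![0, F 2 3, -F 1 3, F 1 2; -F 2 3, 0, -F 0 3, F 0 2;
      F 1 3, F 0 3, 0, -F 0 1; -F 1 2, -F 0 2, F 0 1, 0] := by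
  have hs : ∀ i j, F j i = -F i j := fun i j => congrFun (congrFun h i) j
  have h10 := hs 0 1
  have h20 := hs 0 2
  have h30 := hs 0 3
  have h21 := hs 1 2
  have h31 := hs 1 3
  have h32 := hs 2 3
  ext i j
  fin_cases i <;> fin_cases j <;>
    simp [hodge, Fin.sum_univ_four, lc, ηm, Matrix.diagonal, h10, h20, h30, h21, h31, h32] <;>
    ring

lemma aux_hodge_skew (F : Mat4) (h : Fᵀ = -F) : (hodge F)ᵀ = -hodge F := by
  rw [aux_hodge_eq F h]
  ext i j
  fin_cases i <;> fin_cases j <;> simp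

lemma aux_hodge_hodge (F : Mat4) (h : Fᵀ = -F) : hodge (hodge F) = -F := by
  have hs : ∀ i j, F j i = -F i j := fun i j => congrFun (congrFun h i) j
  rw [aux_hodge_eq _ (aux_hodge_skew F h), aux_hodge_eq F h]
  ext i j
  have h0 := hs i i
  have h1 := hs i j
  fin_cases i <;> fin_cases j <;> simp at h0 h1 ⊢ <;> linarith

lemma aux_hodge_comb (a b : ℝ) (A B : Mat4) : hodge (a • A + b • B) = a • hodge A + b • hodge B := by
  ext i j
  simp only [hodge, Matrix.of_apply, Matrix.add_apply, Matrix.smul_apply, smul_eq_mul,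
    Fin.sum_univ_four]
  ring

lemma aux_bil_e (G : Mat4) (i : Fin 4) (z : V4) : bil G (e i) z = ∑ j, G i j * z j := by
  simp [bil, e, Matrix.mulVec, dotProduct, Pi.single_apply]

lemma aux_icontr (ω : V4 → ℝ) (G : Mat4) (z : V4) : icontr ω G z =
    ∑ j, (-ω (e 0) * G 0 j + ω (e 1) * G 1 j + ω (e 2) * G 2 j + ω (e 3) * G 3 j) * z j := by
  simp only [icontr, aux_bil_e, Fin.sum_univ_four, ηm, Matrix.diagonal]
  simp
  ring

lemma aux_codiff (A : V4 → Mat4) (x z : V4) : codiff A x z =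
    ∑ j, (fderiv ℝ (fun y => A y 0 j) x (e 0) - fderiv ℝ (fun y => A y 1 j) x (e 1)
      - fderiv ℝ (fun y => A y 2 j) x (e 2) - fderiv ℝ (fun y => A y 3 j) x (e 3)) * z j := by
  simp only [codiff, aux_bil_e, Fin.sum_univ_four, ηm, Matrix.diagonal, Dd]
  simp
  ring

lemma aux_lin_codiff (A : V4 → Mat4) (x z : V4) :
    codiff A x z = ∑ j, codiff A x (e j) * z j := by
  have : ∀ j, codiff A x (e j) = (fderiv ℝ (fun y => A y 0 j) x (e 0) - fderiv ℝ (fun y => A y 1 j) x (e 1)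
      - fderiv ℝ (fun y => A y 2 j) x (e 2) - fderiv ℝ (fun y => A y 3 j) x (e 3)) := by
    intro j
    rw [aux_codiff]
    simp [e, Pi.single_apply]
  rw [aux_codiff]
  simp only [this]

lemma aux_lin_icontr (ω : V4 → ℝ) (G : Mat4) (z : V4) :
    icontr ω G z = ∑ j, icontr ω G (e j) * z j := by
  have : ∀ j, icontr ω G (e j) =
      (-ω (e 0) * G 0 j + ω (e 1) * G 1 j + ω (e 2) * G 2 j + ω (e 3) * G 3 j) := by
    intro j
    rw [aux_icontr]
    simp [e, Pi.single_apply]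
  rw [aux_icontr]
  simp only [this]

lemma aux_icontr_e (ω : V4 → ℝ) (G : Mat4) (j : Fin 4) : icontr ω G (e j) =
      (-ω (e 0) * G 0 j + ω (e 1) * G 1 j + ω (e 2) * G 2 j + ω (e 3) * G 3 j) := by
    rw [aux_icontr]
    simp [e, Pi.single_apply]

lemma aux_trace1 (U : Mat4) (h : Uᵀ = -U) (ht : (hat U * hat U).trace = 2) :
    U 0 1 ^ 2 + U 0 2 ^ 2 + U 0 3 ^ 2 - U 1 2 ^ 2 - U 1 3 ^ 2 - U 2 3 ^ 2 = 1 := by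
  have hs : ∀ i j, U j i = -U i j := fun i j => congrFun (congrFun h i) j
  simp only [hat, h, Matrix.trace, Matrix.diag, Matrix.mul_apply, ηm, Matrix.diagonal,
    Fin.sum_univ_four] at ht
  simp at ht
  have h00 := hs 0 0
  have h11 := hs 1 1
  have h22 := hs 2 2
  have h33 := hs 3 3
  have z0 : U 0 0 = 0 := by linarith
  have z1 : U 1 1 = 0 := by linarith
  have z2 : U 2 2 = 0 := by linarith
  have z3 : U 3 3 = 0 := by linarith
  rw [hs 0 1, hs 0 2, hs 0 3, hs 1 2, hs 1 3, hs 2 3, z0, z1, z2, z3] at ht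
  linarith

lemma aux_trace2 (U : Mat4) (h : Uᵀ = -U) (ht : (hat U * hat (hodge U)).trace = 0) :
    U 0 1 * U 2 3 - U 0 2 * U 1 3 + U 0 3 * U 1 2 = 0 := by
  have hs : ∀ i j, U j i = -U i j := fun i j => congrFun (congrFun h i) j
  rw [aux_hodge_eq U h] at ht
  simp only [hat, h, Matrix.trace, Matrix.diag, Matrix.mul_apply, ηm, Matrix.diagonal,
    Fin.sum_univ_four] at ht
  simp at ht
  rw [hs 0 1, hs 0 2, hs 0 3, hs 1 2, hs 1 3, hs 2 3] at ht
  linarith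

lemma aux_alg (U : Mat4) (h : Uᵀ = -U) (ht : (hat U * hat U).trace = 2)
    (ht2 : (hat U * hat (hodge U)).trace = 0) (J K P Q : V4 → ℝ)
    (hP : ∀ z, P z = icontr J U z - icontr K (hodge U) z)
    (hQ : ∀ z, Q z = -icontr J (hodge U) z - icontr K U z) (j : Fin 4) :
    icontr P U (e j) + icontr Q (hodge U) (e j) = J (e j) ∧
    icontr P (hodge U) (e j) - icontr Q U (e j) = K (e j) := by
  have t1 := aux_trace1 U h ht
  have t2 := aux_trace2 U h ht2
  have hs : ∀ i j, U j i = -U i j := fun i j => congrFun (congrFun h i) j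
  have h00 := hs 0 0
  have h11 := hs 1 1
  have h22 := hs 2 2
  have h33 := hs 3 3
  have z0 : U 0 0 = 0 := by linarith
  have z1 : U 1 1 = 0 := by linarith
  have z2 : U 2 2 = 0 := by linarith
  have z3 : U 3 3 = 0 := by linarith
  have h10 := hs 0 1
  have h20 := hs 0 2
  have h30 := hs 0 3
  have h21 := hs 1 2
  have h31 := hs 1 3
  have h32 := hs 2 3
  have hh := aux_hodge_eq U h
  simp only [aux_icontr_e, hP, hQ, hh]
  fin_cases j
  · simp [z0, z1, z2, z3, h10, h20, h30, h21, h31, h32]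
    constructor
    · linear_combination J (e 0) * t1 - 2 * K (e 0) * t2
    · linear_combination K (e 0) * t1 + 2 * J (e 0) * t2
  · simp [z0, z1, z2, z3, h10, h20, h30, h21, h31, h32]
    constructor
    · linear_combination J (e 1) * t1 - 2 * K (e 1) * t2
    · linear_combination K (e 1) * t1 + 2 * J (e 1) * t2
  · simp [z0, z1, z2, z3, h10, h20, h30, h21, h31, h32]
    constructor
    · linear_combination J (e 2) * t1 - 2 * K (e 2) * t2
    · linear_combination K (e 2) * t1 + 2 * J (e 2) * t2
  · simp [z0, z1, z2, z3, h10, h20, h30, h21, h31, h32]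
    constructor
    · linear_combination J (e 3) * t1 - 2 * K (e 3) * t2
    · linear_combination K (e 3) * t1 + 2 * J (e 3) * t2

lemma aux_prod (f g : V4 → ℝ) (A B : V4 → Mat4) (x : V4)
    (hf : DifferentiableAt ℝ f x) (hg : DifferentiableAt ℝ g x)
    (hA : ∀ i j, DifferentiableAt ℝ (fun y => A y i j) x)
    (hB : ∀ i j, DifferentiableAt ℝ (fun y => B y i j) x) (j : Fin 4) :
    codiff (fun y => f y • A y + g y • B y) x (e j) =
      f x * codiff A x (e j) + g x * codiff B x (e j)
        - icontr (fun z => fderiv ℝ f x z) (A x) (e j)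
        - icontr (fun z => fderiv ℝ g x z) (B x) (e j) := by
  have key : ∀ i k : Fin 4, ∀ u, fderiv ℝ (fun y => (f y • A y + g y • B y) i k) x u =
      f x * fderiv ℝ (fun y => A y i k) x u + A x i k * fderiv ℝ f x u +
      (g x * fderiv ℝ (fun y => B y i k) x u + B x i k * fderiv ℝ g x u) := by
    intro i k u
    have := ((hf.hasFDerivAt.mul (hA i k).hasFDerivAt).add
      (hg.hasFDerivAt.mul (hB i k).hasFDerivAt)).fderiv
    have e1 : (fun y => (f y • A y + g y • B y) i k) =
      (f * (fun y => A y i k) + g * fun y => B y i k) := by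
      ext y; simp
    rw [e1, this]
    simp
  simp only [aux_codiff, aux_icontr_e, key]
  simp [e, Pi.single_apply]
  ring

lemma aux_poincare (Φ : V4 → V4 → ℝ) (hlin : ∀ x z, Φ x z = ∑ j, Φ x (e j) * z j)
    (hsm : ∀ j, ContDiff ℝ (⊤ : ℕ∞) (fun x => Φ x (e j)))
    (hcl : ∀ x u v : V4, fderiv ℝ (fun y => Φ y v) x u = fderiv ℝ (fun y => Φ y u) x v) :
    ∃ φ : V4 → ℝ, ContDiff ℝ (⊤ : ℕ∞) φ ∧ ∀ x z, fderiv ℝ φ x z = Φ x z := by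
  let ω : V4 → V4 →L[ℝ] ℝ := fun x =>
    ∑ j, Φ x (e j) • (ContinuousLinearMap.proj j : V4 →L[ℝ] ℝ)
  have hω : ContDiff ℝ (⊤ : ℕ∞) ω :=
    ContDiff.sum fun j _ => (hsm j).smul contDiff_const
  have hωa : ∀ x z, ω x z = Φ x z := by
    intro x z
    rw [hlin]
    simp [ω]
  have hd : Differentiable ℝ ω := hω.differentiable (by simp)
  have hfd : ∀ a u v, fderiv ℝ ω a u v = fderiv ℝ (fun y => Φ y v) a u := by
    intro a u v
    have : (fun y => Φ y v) = fun y => ω y v := by ext y; rw [hωa]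
    rw [this, fderiv_clm_apply (hd a) (differentiableAt_const v)]
    simp
  obtain ⟨φ, hφ⟩ := convex_univ.exists_forall_hasFDerivAt_of_fderiv_symmetric isOpen_univ
    hd.differentiableOn (fun a _ u v => by rw [hfd, hfd, hcl])
  have hφ' : fderiv ℝ φ = ω := by ext1 x; exact (hφ x trivial).fderiv
  refine ⟨φ, ?_, fun x z => by rw [hφ', hωa]⟩
  rw [contDiff_infty_iff_fderiv, hφ']
  exact ⟨fun x => (hφ x trivial).differentiableAt, hω⟩

lemma aux_hodge_smooth (U : V4 → Mat4)
    (hUsm : ∀ i j, ContDiff ℝ (⊤ : ℕ∞) (fun x => U x i j)) (i j : Fin 4) :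
    ContDiff ℝ (⊤ : ℕ∞) (fun x => hodge (U x) i j) := by
  simp only [hodge, Matrix.of_apply]
  fun_prop

lemma aux_codiff_smooth (U : V4 → Mat4)
    (hUsm : ∀ i j, ContDiff ℝ (⊤ : ℕ∞) (fun x => U x i j)) (z : V4) :
    ContDiff ℝ (⊤ : ℕ∞) (fun x => codiff U x z) := by
  simp only [aux_codiff]
  have : ∀ i j u, ContDiff ℝ (⊤ : ℕ∞) (fun x => fderiv ℝ (fun y => U y i j) x u) := by
    intro i j u
    have := (contDiff_infty_iff_fderiv.1 (hUsm i j)).2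
    exact this.clm_apply contDiff_const
  fun_prop

lemma aux_dcos (φ ψ : V4 → ℝ) (x u : V4) (dφ : DifferentiableAt ℝ φ x)
    (dψ : DifferentiableAt ℝ ψ x) :
    fderiv ℝ (fun y => Real.exp (φ y) * Real.cos (ψ y)) x u =
        Real.exp (φ x) * Real.cos (ψ x) * fderiv ℝ φ x u
          - Real.exp (φ x) * Real.sin (ψ x) * fderiv ℝ ψ x u := by
  rw [fderiv_fun_mul dφ.exp dψ.cos, fderiv_exp dφ, fderiv_cos dψ]
  simp only [_root_.add_apply, _root_.smul_apply, smul_eq_mul]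
  ring

lemma aux_dsin (φ ψ : V4 → ℝ) (x u : V4) (dφ : DifferentiableAt ℝ φ x)
    (dψ : DifferentiableAt ℝ ψ x) :
    fderiv ℝ (fun y => Real.exp (φ y) * Real.sin (ψ y)) x u =
        Real.exp (φ x) * Real.sin (ψ x) * fderiv ℝ φ x u
          + Real.exp (φ x) * Real.cos (ψ x) * fderiv ℝ ψ x u := by
  rw [fderiv_fun_mul dφ.exp dψ.sin, fderiv_exp dφ, fderiv_sin dψ]
  simp only [_root_.add_apply, _root_.smul_apply, smul_eq_mul]
  ring

lemma aux_icontr_smooth (J : V4 → V4 → ℝ) (G : V4 → Mat4)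
    (hJ : ∀ z, ContDiff ℝ (⊤ : ℕ∞) (fun x => J x z))
    (hG : ∀ i j, ContDiff ℝ (⊤ : ℕ∞) (fun x => G x i j)) (j : Fin 4) :
    ContDiff ℝ (⊤ : ℕ∞) (fun x => icontr (J x) (G x) (e j)) := by
  simp only [aux_icontr_e]
  exact ((((hJ _).neg.mul (hG 0 j)).add ((hJ _).mul (hG 1 j))).add ((hJ _).mul (hG 2 j))).add
    ((hJ _).mul (hG 3 j))

/-- Rainich's maxwellian structure theorem (flat case): if the 1-form fields
`Φ = i(δU)U - i(δ*U)*U` and `Ψ = -i(δU)*U - i(δ*U)U` of a smooth field of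
unitary 2-forms on `ℝ⁴` are closed, then potentials `φ, ψ` with `Dφ = Φ`,
`Dψ = Ψ` exist, and for any such potentials `F = e^φ(cos ψ · U + sin ψ · *U)`
satisfies the source-free Maxwell equations. -/
theorem stmt19 (U : V4 → Mat4)
    (hUsk : ∀ x, (U x)ᵀ = -(U x))
    (hUun : ∀ x, (hat (U x) * hat (U x)).trace = 2 ∧
      (hat (U x) * hat (hodge (U x))).trace = 0)
    (hUsm : ∀ i j, ContDiff ℝ (⊤ : ℕ∞) (fun x => U x i j))
    (Φ Ψ : V4 → V4 → ℝ)
    (hΦ : ∀ x z, Φ x z =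
      icontr (codiff U x) (U x) z -
        icontr (codiff (fun y => hodge (U y)) x) (hodge (U x)) z)
    (hΨ : ∀ x z, Ψ x z =
      -icontr (codiff U x) (hodge (U x)) z -
        icontr (codiff (fun y => hodge (U y)) x) (U x) z)
    (hclΦ : ∀ x u v : V4, fderiv ℝ (fun y => Φ y v) x u =
      fderiv ℝ (fun y => Φ y u) x v)
    (hclΨ : ∀ x u v : V4, fderiv ℝ (fun y => Ψ y v) x u =
      fderiv ℝ (fun y => Ψ y u) x v) :
    (∃ φ ψ : V4 → ℝ, ContDiff ℝ (⊤ : ℕ∞) φ ∧ ContDiff ℝ (⊤ : ℕ∞) ψ ∧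
      (∀ x z, fderiv ℝ φ x z = Φ x z) ∧ (∀ x z, fderiv ℝ ψ x z = Ψ x z)) ∧
    ∀ φ ψ : V4 → ℝ, ContDiff ℝ (⊤ : ℕ∞) φ → ContDiff ℝ (⊤ : ℕ∞) ψ →
      (∀ x z, fderiv ℝ φ x z = Φ x z) → (∀ x z, fderiv ℝ ψ x z = Ψ x z) →
      ∀ x z : V4,
        codiff (fun y => Real.exp (φ y) •
          (Real.cos (ψ y) • U y + Real.sin (ψ y) • hodge (U y))) x z = 0 ∧
        codiff (fun y => hodge (Real.exp (φ y) •
          (Real.cos (ψ y) • U y + Real.sin (ψ y) • hodge (U y)))) x z = 0 := by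
  have hVsk : ∀ x, (hodge (U x))ᵀ = -hodge (U x) := fun x => aux_hodge_skew _ (hUsk x)
  have hVsm := aux_hodge_smooth U hUsm
  have hJ := aux_codiff_smooth U hUsm
  have hK := aux_codiff_smooth (fun y => hodge (U y)) hVsm
  constructor
  · obtain ⟨φ, h1, h2⟩ := aux_poincare Φ (by
      intro x z
      simp only [hΦ]
      rw [aux_lin_icontr _ _ z, aux_lin_icontr _ (hodge (U x)) z, ← Finset.sum_sub_distrib]
      simp only [sub_mul]) (by
      intro j
      simp only [hΦ]
      exact (aux_icontr_smooth _ U hJ hUsm j).sub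
        (aux_icontr_smooth _ (fun y => hodge (U y)) hK hVsm j)) hclΦ
    obtain ⟨ψ, h3, h4⟩ := aux_poincare Ψ (by
      intro x z
      simp only [hΨ]
      rw [aux_lin_icontr _ _ z, aux_lin_icontr _ (U x) z, ← Finset.sum_neg_distrib,
        ← Finset.sum_sub_distrib]
      simp only [sub_mul, neg_mul]) (by
      intro j
      simp only [hΨ]
      exact (aux_icontr_smooth _ (fun y => hodge (U y)) hJ hVsm j).neg.sub
        (aux_icontr_smooth _ U hK hUsm j)) hclΨ
    exact ⟨φ, ψ, h1, h3, h2, h4⟩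
  · intro φ ψ hφ hψ hdφ hdψ x z
    have alg := aux_alg (U x) (hUsk x) (hUun x).1 (hUun x).2 (codiff U x)
      (codiff (fun y => hodge (U y)) x) (Φ x) (Ψ x) (hΦ x) (hΨ x)
    have dφ : DifferentiableAt ℝ φ x := hφ.differentiable (by simp) x
    have dψ : DifferentiableAt ℝ ψ x := hψ.differentiable (by simp) x
    have dU : ∀ i j, DifferentiableAt ℝ (fun y => U y i j) x :=
      fun i j => (hUsm i j).differentiable (by simp) x
    have dV : ∀ i j, DifferentiableAt ℝ (fun y => hodge (U y) i j) x :=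
      fun i j => (hVsm i j).differentiable (by simp) x
    have hc : DifferentiableAt ℝ (fun y => Real.exp (φ y) * Real.cos (ψ y)) x :=
      dφ.exp.fun_mul dψ.cos
    have hsn : DifferentiableAt ℝ (fun y => Real.exp (φ y) * Real.sin (ψ y)) x :=
      dφ.exp.fun_mul dψ.sin
    have hc' : ∀ u, fderiv ℝ (fun y => Real.exp (φ y) * Real.cos (ψ y)) x u =
        Real.exp (φ x) * Real.cos (ψ x) * Φ x u - Real.exp (φ x) * Real.sin (ψ x) * Ψ x u := by
      intro u
      rw [aux_dcos φ ψ x u dφ dψ, hdφ, hdψ]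
    have hs' : ∀ u, fderiv ℝ (fun y => Real.exp (φ y) * Real.sin (ψ y)) x u =
        Real.exp (φ x) * Real.sin (ψ x) * Φ x u + Real.exp (φ x) * Real.cos (ψ x) * Ψ x u := by
      intro u
      rw [aux_dsin φ ψ x u dφ dψ, hdφ, hdψ]
    have hns' : ∀ u, fderiv ℝ (fun y => -(Real.exp (φ y) * Real.sin (ψ y))) x u =
        -(Real.exp (φ x) * Real.sin (ψ x) * Φ x u + Real.exp (φ x) * Real.cos (ψ x) * Ψ x u) := by
      intro u
      rw [fderiv_fun_neg, ← hs']
      rfl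
    have e1 : (fun y => Real.exp (φ y) •
          (Real.cos (ψ y) • U y + Real.sin (ψ y) • hodge (U y))) =
        fun y => (Real.exp (φ y) * Real.cos (ψ y)) • U y +
          (Real.exp (φ y) * Real.sin (ψ y)) • hodge (U y) := by
      ext1 y
      rw [smul_add, smul_smul, smul_smul]
    have e2 : (fun y => hodge (Real.exp (φ y) •
          (Real.cos (ψ y) • U y + Real.sin (ψ y) • hodge (U y)))) =
        fun y => (Real.exp (φ y) * Real.cos (ψ y)) • hodge (U y) +
          (-(Real.exp (φ y) * Real.sin (ψ y))) • U y := by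
      ext1 y
      rw [smul_add, smul_smul, smul_smul, aux_hodge_comb, aux_hodge_hodge _ (hUsk y), neg_smul,
        smul_neg]
    rw [e1, e2, aux_lin_codiff, aux_lin_codiff _ x z]
    constructor
    · refine Finset.sum_eq_zero fun j _ => ?_
      rw [aux_prod _ _ U (fun y => hodge (U y)) x hc hsn dU dV]
      obtain ⟨a1, a2⟩ := alg j
      rw [← a1, ← a2]
      simp only [aux_icontr_e, hc', hs']
      ring
    · refine Finset.sum_eq_zero fun j _ => ?_
      rw [aux_prod _ _ (fun y => hodge (U y)) U x hc hsn.fun_neg dV dU]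
      obtain ⟨a1, a2⟩ := alg j
      rw [← a1, ← a2]
      simp only [aux_icontr_e, hc', hns']
      ring
end
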